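/- arXiv:1111.3067 — 4 statements merged into one kernel-verified Lean document; each statement's English description precedes it below -/
import Mathlib

section
/- Let G be a countable group, Ω = [0,1]^G with the product σ-algebra and the action (γ·ω)(x) = ω(γ⁻¹x), and let μ be a G-invariant probability measure on Ω. Suppose R assigns to each ω ∈ Ω a binary relation R(ω) on G such that: for every x, y ∈ G the set {ω : (x,y) ∈ R(ω)} is measurable; for μ-a.e. ω, R(ω) is an equivalence relation on G; and R is equivariant, i.e. (x,y) ∈ R(ω) if and only if (γx, γy) ∈ R(γ·ω). Suppose further D assigns to each ω ∈ Ω a subset D(ω) ⊆ G such that {ω : x ∈ D(ω)} is measurable for each x ∈ G, D(γ·ω) = γ·D(ω), and for μ-a.e. ω, every R(ω)-equivalence class C satisfies that C ∩ D(ω) is finite and nonempty. Then for μ-a.e. ω, every R(ω)-equivalence class is finite. -/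
open MeasureTheory

/-- **Finiteness of invariantly distinguished classes.**
Let `G` be a countable group acting on `Ω = [0,1]^G` by `(γ • ω) x = ω (γ⁻¹ * x)`, and let
`μ` be a `G`-invariant probability measure on `Ω`.  Suppose `R` assigns measurably and
equivariantly to each `ω` a relation on `G` which is a.e. an equivalence relation, and `D`
assigns measurably and equivariantly to each `ω` a subset of `G` such that a.e. every
`R ω`-equivalence class meets `D ω` in a finite nonempty set.  Then a.e. every
`R ω`-equivalence class is finite. -/
theorem invariant_marked_classes_finite {G : Type*} [Group G] [Countable G]
    (μ : Measure (G → unitInterval)) [IsProbabilityMeasure μ]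
    (hinv : ∀ γ : G, Measure.map (fun ω (x : G) => ω (γ⁻¹ * x)) μ = μ)
    (R : (G → unitInterval) → G → G → Prop)
    (hRmeas : ∀ x y : G, MeasurableSet {ω : G → unitInterval | R ω x y})
    (hRequiv : ∀ᵐ ω ∂μ, Equivalence (R ω))
    (hRequivariant : ∀ (γ x y : G) (ω : G → unitInterval),
      R ω x y ↔ R (fun z => ω (γ⁻¹ * z)) (γ * x) (γ * y))
    (D : (G → unitInterval) → Set G)
    (hDmeas : ∀ x : G, MeasurableSet {ω : G → unitInterval | x ∈ D ω})
    (hDequivariant : ∀ (γ : G) (ω : G → unitInterval),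
      D (fun z => ω (γ⁻¹ * z)) = (fun x => γ * x) '' D ω)
    (hDfin : ∀ᵐ ω ∂μ, ∀ x : G,
      ({y | R ω x y} ∩ D ω).Finite ∧ ({y | R ω x y} ∩ D ω).Nonempty) :
    ∀ᵐ ω ∂μ, ∀ x : G, {y | R ω x y}.Finite := by
  classical
  let I : (G → unitInterval) → G → G → ENNReal := fun ω x y =>
    Set.indicator {ω : G → unitInterval | R ω x y ∧ y ∈ D ω} (fun _ => (1 : ENNReal)) ω
  let N : (G → unitInterval) → G → ENNReal := fun ω x => ∑' y, I ω x y
  let f : (G → unitInterval) → G → G → ENNReal := fun ω x y => I ω x y * (N ω x)⁻¹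
  have hImeas : ∀ x y, Measurable (fun ω => I ω x y) := fun x y =>
    measurable_const.indicator ((hRmeas x y).inter (hDmeas y))
  have hNmeas : ∀ x, Measurable (fun ω => N ω x) := fun x =>
    Measurable.ennreal_tsum (fun y => hImeas x y)
  have hfmeas : ∀ x y, Measurable (fun ω => f ω x y) := fun x y =>
    (hImeas x y).mul (hNmeas x).inv
  have hIeq : ∀ (γ x y : G) (ω : G → unitInterval),
      I (fun z => ω (γ⁻¹ * z)) (γ * x) (γ * y) = I ω x y := by
    intro γ x y ω
    have h2 : γ * y ∈ D (fun z => ω (γ⁻¹ * z)) ↔ y ∈ D ω := by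
      rw [hDequivariant]; simp
    simp only [I, Set.indicator_apply, Set.mem_ofPred_eq]
    simp only [← hRequivariant, h2]
  have hNeq : ∀ (γ x : G) (ω : G → unitInterval),
      N (fun z => ω (γ⁻¹ * z)) (γ * x) = N ω x := by
    intro γ x ω
    simp only [N]
    rw [← (Equiv.mulLeft γ).tsum_eq]
    exact tsum_congr (fun y => hIeq γ x y ω)
  have hfeq : ∀ (γ x y : G) (ω : G → unitInterval),
      f (fun z => ω (γ⁻¹ * z)) (γ * x) (γ * y) = f ω x y := by
    intro γ x y ω
    simp only [f]
    rw [hIeq, hNeq]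
  have hint : ∀ γ x y : G, ∫⁻ ω, f ω (γ * x) (γ * y) ∂μ = ∫⁻ ω, f ω x y ∂μ := by
    intro γ x y
    have hT : Measurable (fun (ω : G → unitInterval) (x : G) => ω (γ⁻¹ * x)) :=
      measurable_pi_lambda _ (fun a => measurable_pi_apply _)
    conv_lhs => rw [← hinv γ]
    rw [lintegral_map (hfmeas _ _) hT]
    exact lintegral_congr (fun ω => hfeq γ x y ω)
  have hout : ∀ ω x, ∑' y, f ω x y ≤ 1 := by
    intro ω x
    simp only [f]
    rw [ENNReal.tsum_mul_right]
    exact ENNReal.mul_inv_le_one _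
  have hin : ∀ z, ∫⁻ ω, ∑' x, f ω x z ∂μ ≤ 1 := by
    intro z
    rw [lintegral_tsum (fun x => (hfmeas x z).aemeasurable)]
    let e : G ≃ G := (Equiv.inv G).trans ((Equiv.mulLeft z).trans (Equiv.mulRight z))
    have h1 : ∀ x, ∫⁻ ω, f ω x z ∂μ = ∫⁻ ω, f ω z (e x) ∂μ := by
      intro x
      rw [← hint (z * x⁻¹) x z]
      simp [e]
    rw [tsum_congr h1, e.tsum_eq (fun w => ∫⁻ ω, f ω z w ∂μ),
      ← lintegral_tsum (fun x => (hfmeas z x).aemeasurable)]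
    calc ∫⁻ ω, ∑' y, f ω z y ∂μ ≤ ∫⁻ _, 1 ∂μ := lintegral_mono (fun ω => hout ω z)
      _ = 1 := by simp
  have hae : ∀ᵐ ω ∂μ, ∀ z, ∑' x, f ω x z < ⊤ := by
    rw [ae_all_iff]
    intro z
    exact ae_lt_top (Measurable.ennreal_tsum (fun x => hfmeas x z))
      (ne_top_of_le_ne_top ENNReal.one_ne_top (hin z))
  filter_upwards [hae, hRequiv, hDfin] with ω h1 hE hF x
  obtain ⟨z, hxz, hzD⟩ := (hF x).2
  have hNtop : N ω z ≠ ⊤ := by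
    have hfin := (hF z).1
    have : N ω z = ∑ y ∈ hfin.toFinset, I ω z y := by
      refine tsum_eq_sum (fun y hy => ?_)
      refine Set.indicator_of_notMem (fun h => hy ?_) _
      rw [Set.Finite.mem_toFinset]
      exact h
    rw [this]
    refine (ENNReal.sum_lt_top.2 (fun y _ => ?_)).ne
    simp only [I, Set.indicator_apply]
    split_ifs <;> simp
  have hpos : (N ω z)⁻¹ ≠ 0 := ENNReal.inv_ne_zero.2 hNtop
  refine (ENNReal.finite_const_le_of_tsum_ne_top (h1 z).ne hpos).subset (fun y hy => ?_)
  have hyz : R ω y z := hE.trans (hE.symm hy) hxz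
  have hN : N ω y = N ω z := by
    refine tsum_congr (fun w => ?_)
    have : R ω y w ↔ R ω z w := ⟨fun h => hE.trans (hE.symm hyz) h, fun h => hE.trans hyz h⟩
    simp only [I, Set.indicator_apply, Set.mem_ofPred_eq, this]
  have hI : I ω y z = 1 := by
    simp [I, Set.indicator_apply, hyz, hzD]
  simp only [Set.mem_ofPred_eq, f]
  rw [hN, hI, one_mul]
end

section
/- Let T be a locally finite tree in which every vertex has degree at least 3, and let Π be a partition of the vertex set of T such that every cell of Π is finite, induces a connected subgraph of T, and contains at least 2 vertices. Then in the quotient graph T^Π every vertex (i.e. every cell) has degree at least 4. -/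
/-- The quotient graph `T^Π` of a graph `T` by a partition `P` of its vertex set:
its vertices are the cells of `P`, and two distinct cells are adjacent iff some edge
of `T` joins a vertex of one to a vertex of the other. -/
def quotientGraph {V : Type*} (T : SimpleGraph V) (P : Set (Set V)) : SimpleGraph P :=
  SimpleGraph.fromRel (fun C C' => ∃ u ∈ (C : Set V), ∃ v ∈ (C' : Set V), T.Adj u v)

/-- In an acyclic graph, two disjoint connected sets are joined by at most one edge. -/
theorem joining_edge_unique {V : Type*} (T : SimpleGraph V) (hT : T.IsAcyclic)
    (C D : Set V) (hCD : Disjoint C D) (hC : (T.induce C).Connected)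
    (hD : (T.induce D).Connected) {u u' v v' : V} (hu : u ∈ C) (hu' : u' ∈ C)
    (hv : v ∈ D) (hv' : v' ∈ D) (h : T.Adj u v) (h' : T.Adj u' v') : u = u' ∧ v = v' := by
  by_contra hne
  have hb := SimpleGraph.isAcyclic_iff_forall_isBridge.1 hT (e := s(u, v)) h
  rw [SimpleGraph.isBridge_iff] at hb
  apply hb
  have hdis : ∀ x, x ∈ C → x ∈ D → False := fun x a b => Set.disjoint_left.1 hCD a b
  let fC : T.induce C →g T.deleteEdges {s(u, v)} :=
    ⟨Subtype.val, by
      rintro ⟨a, ha⟩ ⟨b, hbm⟩ hab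
      simp only [SimpleGraph.comap_adj, Function.Embedding.subtype_apply] at hab
      simp only [SimpleGraph.deleteEdges_adj, Set.mem_singleton_iff, Sym2.eq_iff]
      refine ⟨hab, ?_⟩
      rintro (⟨rfl, rfl⟩ | ⟨rfl, rfl⟩)
      · exact hdis _ hbm hv
      · exact hdis _ ha hv⟩
  let fD : T.induce D →g T.deleteEdges {s(u, v)} :=
    ⟨Subtype.val, by
      rintro ⟨a, ha⟩ ⟨b, hbm⟩ hab
      simp only [SimpleGraph.comap_adj, Function.Embedding.subtype_apply] at hab
      simp only [SimpleGraph.deleteEdges_adj, Set.mem_singleton_iff, Sym2.eq_iff]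
      refine ⟨hab, ?_⟩
      rintro (⟨rfl, rfl⟩ | ⟨rfl, rfl⟩)
      · exact hdis _ hu ha
      · exact hdis _ hu hbm⟩
  have r1 : (T.deleteEdges {s(u, v)}).Reachable u u' :=
    (hC.preconnected ⟨u, hu⟩ ⟨u', hu'⟩).map fC
  have r3 : (T.deleteEdges {s(u, v)}).Reachable v' v :=
    (hD.preconnected ⟨v', hv'⟩ ⟨v, hv⟩).map fD
  have r2 : (T.deleteEdges {s(u, v)}).Adj u' v' := by
    simp only [SimpleGraph.deleteEdges_adj, Set.mem_singleton_iff, Sym2.eq_iff]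
    refine ⟨h', ?_⟩
    rintro (⟨rfl, rfl⟩ | ⟨rfl, rfl⟩)
    · exact hne ⟨rfl, rfl⟩
    · exact hdis _ hu hv'
  exact r1.trans (r2.reachable.trans r3)

/-- A vertex of degree at least three with a unique neighbor in `C` has two neighbors
outside `C`. -/
theorem two_outside {V : Type*} (T : SimpleGraph V) [T.LocallyFinite] (C : Set V) (x : C)
    (hd : 3 ≤ T.degree x) (hx : ∃! y, (T.induce C).Adj x y) :
    ∃ a b, a ≠ b ∧ a ∉ C ∧ b ∉ C ∧ T.Adj x a ∧ T.Adj x b := by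
  classical
  obtain ⟨y, -, hy⟩ := hx
  have hc : 1 < ((T.neighborFinset x).erase y).card := by
    have := Finset.pred_card_le_card_erase (s := T.neighborFinset x) (a := (y : V))
    rw [SimpleGraph.card_neighborFinset_eq_degree] at this
    omega
  obtain ⟨a, ha, b, hb, hab⟩ := Finset.one_lt_card.1 hc
  have key : ∀ a ∈ (T.neighborFinset x).erase y, a ∉ C ∧ T.Adj x a := by
    intro a ha
    rw [Finset.mem_erase, SimpleGraph.mem_neighborFinset] at ha
    exact ⟨fun h => ha.1 (congrArg Subtype.val (hy ⟨a, h⟩ ha.2)), ha.2⟩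
  exact ⟨a, b, hab, (key a ha).1, (key b hb).1, (key a ha).2, (key b hb).2⟩

/-- If `T` is a locally finite tree of minimum degree at least `3` and `Π` is a partition of
its vertex set all of whose cells are finite, induce connected subgraphs, and have at least
two vertices, then every vertex of the quotient graph `T^Π` has degree at least `4`, i.e.
has four distinct neighbors. -/
theorem quotientGraph_min_degree_four {V : Type*} (T : SimpleGraph V) [T.LocallyFinite]
    (hT : T.IsTree) (hdeg : ∀ v : V, 3 ≤ T.degree v)
    (P : Set (Set V)) (hP : Setoid.IsPartition P)
    (hfin : ∀ C ∈ P, C.Finite)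
    (hconn : ∀ C ∈ P, (T.induce C).Connected)
    (htwo : ∀ C ∈ P, 2 ≤ C.ncard) :
    ∀ C : P, ∃ D₁ D₂ D₃ D₄ : P,
      D₁ ≠ D₂ ∧ D₁ ≠ D₃ ∧ D₁ ≠ D₄ ∧ D₂ ≠ D₃ ∧ D₂ ≠ D₄ ∧ D₃ ≠ D₄ ∧
      (quotientGraph T P).Adj C D₁ ∧ (quotientGraph T P).Adj C D₂ ∧
      (quotientGraph T P).Adj C D₃ ∧ (quotientGraph T P).Adj C D₄ := by
  classical
  rintro ⟨C, hCP⟩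
  have hCfin := hfin C hCP
  have : Finite C := hCfin
  have : Fintype C := Fintype.ofFinite C
  have : Nontrivial C := by
    rw [Set.nontrivial_coe_sort, ← Set.one_lt_ncard_iff_nontrivial]
    exact htwo C hCP
  have htree : (T.induce C).IsTree := ⟨hconn C hCP, hT.2.induce C⟩
  obtain ⟨x, y, hxy, hx, hy⟩ := htree.exists_ne_and_degree_eq_one
  rw [SimpleGraph.degree_eq_one_iff_existsUnique_adj] at hx hy
  obtain ⟨a₁, a₂, ha, ha₁, ha₂, hxa₁, hxa₂⟩ := two_outside T C x (hdeg x) hx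
  obtain ⟨b₁, b₂, hb, hb₁, hb₂, hyb₁, hyb₂⟩ := two_outside T C y (hdeg y) hy
  have cell : ∀ v : V, ∃ D : P, v ∈ (D : Set V) := fun v => by
    obtain ⟨D, ⟨hD, hv⟩, -⟩ := hP.2 v
    exact ⟨⟨D, hD⟩, hv⟩
  choose c hc using cell
  have hnc : ∀ v, v ∉ C → C ≠ (c v : Set V) := fun v hv h => hv (h ▸ hc v)
  have adj : ∀ u : C, ∀ v, v ∉ C → T.Adj u v → (quotientGraph T P).Adj ⟨C, hCP⟩ (c v) := by
    intro u v hv h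
    rw [quotientGraph, SimpleGraph.fromRel_adj]
    exact ⟨fun e => hnc v hv (congrArg Subtype.val e), Or.inl ⟨u, u.2, v, hc v, h⟩⟩
  have inj : ∀ (u u' : C) (v v' : V), v ∉ C → T.Adj u v → T.Adj u' v' → c v = c v' →
      u = u' ∧ v = v' := by
    intro u u' v v' hv h h' e
    have hdis : Disjoint C (c v : Set V) :=
      hP.pairwiseDisjoint hCP (c v).2 (hnc v hv)
    have := joining_edge_unique T hT.2 C (c v) hdis (hconn C hCP) (hconn _ (c v).2)
      u.2 u'.2 (hc v) (e ▸ hc v') h h'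
    exact ⟨Subtype.ext this.1, this.2⟩
  exact ⟨c a₁, c a₂, c b₁, c b₂,
    fun e => ha (inj _ _ _ _ ha₁ hxa₁ hxa₂ e).2,
    fun e => hxy (inj _ _ _ _ ha₁ hxa₁ hyb₁ e).1,
    fun e => hxy (inj _ _ _ _ ha₁ hxa₁ hyb₂ e).1,
    fun e => hxy (inj _ _ _ _ ha₂ hxa₂ hyb₁ e).1,
    fun e => hxy (inj _ _ _ _ ha₂ hxa₂ hyb₂ e).1,
    fun e => hb (inj _ _ _ _ hb₁ hyb₁ hyb₂ e).2,
    adj _ _ ha₁ hxa₁, adj _ _ ha₂ hxa₂, adj _ _ hb₁ hyb₁, adj _ _ hb₂ hyb₂⟩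
end

section
/- Let T be an infinite locally finite tree and let Π be a partition of the vertex set of T such that every cell of Π is finite, induces a connected subgraph of T, and contains at least one furcation of T. Then every vertex of the quotient graph T^Π is a furcation of T^Π; in particular, every vertex of T^Π has degree at least 3. -/
/-- A graph has at least three infinite connected components. -/
def HasThreeInfiniteComponents {W : Type*} (H : SimpleGraph W) : Prop :=
  ∃ c₁ c₂ c₃ : H.ConnectedComponent, c₁ ≠ c₂ ∧ c₁ ≠ c₃ ∧ c₂ ≠ c₃ ∧
    c₁.supp.Infinite ∧ c₂.supp.Infinite ∧ c₃.supp.Infinite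

/-- A vertex `v` of a graph `H` is a furcation if deleting `v` leaves at least three
infinite connected components. -/
def IsFurcation {W : Type*} (H : SimpleGraph W) (v : W) : Prop :=
  HasThreeInfiniteComponents (H.induce {u : W | u ≠ v})

theorem exists_nbr_aux {W : Type*} (H : SimpleGraph W) (c : W) {w z : W} (p : H.Walk w z)
    (hz : z = c) (hw : w ≠ c) :
    ∃ d : {u : W | u ≠ c}, H.Adj c d ∧ (H.induce {u : W | u ≠ c}).Reachable ⟨w, hw⟩ d := by
  induction p with
  | nil => exact absurd hz hw
  | @cons a b e hab q ih =>
    by_cases hb : b = c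
    · subst hb
      exact ⟨⟨a, hw⟩, hab.symm, SimpleGraph.Reachable.refl _⟩
    · obtain ⟨d, hd, hr⟩ := ih hz hb
      refine ⟨d, hd, SimpleGraph.Reachable.trans (SimpleGraph.Adj.reachable ?_) hr⟩
      simpa using hab

theorem cell_reach_aux {V : Type*} (T : SimpleGraph V) (D : Set V) (hD : (T.induce D).Connected)
    (v : V) (hv : v ∉ D) (a b : {u : V | u ≠ v}) (ha : (a : V) ∈ D) (hb : (b : V) ∈ D) :
    (T.induce {u : V | u ≠ v}).Reachable a b := by
  have h := hD.preconnected ⟨a, ha⟩ ⟨b, hb⟩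
  have hsub : D ⊆ {u : V | u ≠ v} := fun x hx hxv => hv (hxv ▸ hx)
  exact h.map (SimpleGraph.induceHomOfLE T hsub).toHom

theorem quot_reach_aux {V : Type*} (T : SimpleGraph V)
    (P : Set (Set V)) (hconn : ∀ C ∈ P, (T.induce C).Connected)
    (C : P) (v : V) (hv : ∀ D : P, D ≠ C → v ∉ (D : Set V))
    {D D' : {X : P | X ≠ C}}
    (p : ((quotientGraph T P).induce {X : P | X ≠ C}).Walk D D') :
    ∀ (a b : {u : V | u ≠ v}), (a : V) ∈ (D : P).1 → (b : V) ∈ (D' : P).1 →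
    (T.induce {u : V | u ≠ v}).Reachable a b := by
  induction p with
  | @nil D => exact fun a b ha hb =>
      cell_reach_aux T _ (hconn _ D.1.2) v (hv _ D.2) a b ha hb
  | @cons D E F h q ih =>
    intro a b ha hb
    have h' : (quotientGraph T P).Adj D.1 E.1 := by simpa using h
    have h2 : ∃ x ∈ (D : P).1, ∃ y ∈ (E : P).1, T.Adj x y := by
      rw [quotientGraph, SimpleGraph.fromRel_adj] at h'
      rcases h'.2 with h3 | ⟨x, hx, y, hy, hxy⟩
      · exact h3
      · exact ⟨y, hy, x, hx, hxy.symm⟩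
    obtain ⟨x, hx, y, hy, hxy⟩ := h2
    have hxv : x ≠ v := fun e => hv _ D.2 (e ▸ hx)
    have hyv : y ≠ v := fun e => hv _ E.2 (e ▸ hy)
    have r1 := cell_reach_aux T _ (hconn _ D.1.2) v (hv _ D.2) a ⟨x, hxv⟩ ha hx
    have r2 : (T.induce {u : V | u ≠ v}).Reachable ⟨x, hxv⟩ ⟨y, hyv⟩ := by
      apply SimpleGraph.Adj.reachable
      simpa using hxy
    exact (r1.trans r2).trans (ih ⟨y, hyv⟩ b hy hb)

/-- If `T` is an infinite locally finite tree and `Π` is a partition of its vertex set all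
of whose cells are finite, induce connected subgraphs, and contain at least one furcation
of `T`, then every vertex of the quotient graph `T^Π` is a furcation of `T^Π`; in particular
every vertex of `T^Π` has degree at least `3` (has three distinct neighbors). -/
theorem quotientGraph_all_furcations {V : Type*} [Infinite V] (T : SimpleGraph V)
    [T.LocallyFinite] (hT : T.IsTree)
    (P : Set (Set V)) (hP : Setoid.IsPartition P)
    (hfin : ∀ C ∈ P, C.Finite)
    (hconn : ∀ C ∈ P, (T.induce C).Connected)
    (hfurc : ∀ C ∈ P, ∃ v ∈ C, IsFurcation T v) :
    ∀ C : P, IsFurcation (quotientGraph T P) C ∧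
      ∃ D₁ D₂ D₃ : P, D₁ ≠ D₂ ∧ D₁ ≠ D₃ ∧ D₂ ≠ D₃ ∧
        (quotientGraph T P).Adj C D₁ ∧ (quotientGraph T P).Adj C D₂ ∧
        (quotientGraph T P).Adj C D₃ := by
  classical
  have hne : ∀ D ∈ P, D.Nonempty := fun D hD => Setoid.nonempty_of_mem_partition hP hD
  have hdisj : ∀ D ∈ P, ∀ E ∈ P, ∀ x, x ∈ D → x ∈ E → D = E := fun D hD E hE x hxD hxE =>
    (hP.2 x).unique ⟨hD, hxD⟩ ⟨hE, hxE⟩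
  have hex : ∀ x : V, ∃ D : P, x ∈ (D : Set V) := fun x => by
    obtain ⟨D, hD, -⟩ := hP.2 x
    exact ⟨⟨D, hD.1⟩, hD.2⟩
  choose π hπ using hex
  have hπeq : ∀ (D : P) x, x ∈ (D : Set V) → π x = D := fun D x hx =>
    Subtype.ext (hdisj _ (π x).2 _ D.2 x (hπ x) hx)
  have hQreach : ∀ x y : V, (quotientGraph T P).Reachable (π x) (π y) := by
    intro x y
    obtain ⟨p⟩ := hT.connected.preconnected x y
    induction p with
    | nil => exact SimpleGraph.Reachable.refl _
    | @cons a b e hab q ih =>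
      refine SimpleGraph.Reachable.trans ?_ ih
      by_cases hE : π a = π b
      · rw [hE]
      · apply SimpleGraph.Adj.reachable
        rw [quotientGraph, SimpleGraph.fromRel_adj]
        exact ⟨hE, Or.inl ⟨a, hπ a, b, hπ b, hab⟩⟩
  have hQ : (quotientGraph T P).Preconnected := by
    intro D E
    obtain ⟨x, hx⟩ := hne _ D.2
    obtain ⟨y, hy⟩ := hne _ E.2
    have := hQreach x y
    rwa [hπeq D x hx, hπeq E y hy] at this
  intro C
  obtain ⟨v, hvC, K₁, K₂, K₃, h12, h13, h23, i1, i2, i3⟩ := hfurc C.1 C.2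
  have hv : ∀ D : P, D ≠ C → v ∉ (D : Set V) := fun D hD hvD =>
    hD (Subtype.ext (hdisj _ D.2 _ C.2 v hvD hvC))
  set G := (quotientGraph T P).induce {X : P | X ≠ C} with hG
  -- every component contains a neighbour of `C`
  have hnbr : ∀ k : G.ConnectedComponent, ∃ d : {X : P | X ≠ C},
      (quotientGraph T P).Adj C d ∧ G.connectedComponentMk d = k := by
    intro k
    induction k using SimpleGraph.ConnectedComponent.ind with
    | h D =>
      obtain ⟨p⟩ := hQ D.1 C
      obtain ⟨d, hd, hr⟩ := exists_nbr_aux (quotientGraph T P) C p rfl D.2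
      exact ⟨d, hd, SimpleGraph.ConnectedComponent.sound hr.symm⟩
  have hnfin : {d : P | (quotientGraph T P).Adj C d}.Finite := by
    have : (π '' (⋃ u ∈ C.1, T.neighborSet u)).Finite := by
      apply Set.Finite.image
      exact (hfin _ C.2).biUnion fun u _ => Set.toFinite _
    refine this.subset ?_
    intro D hD
    have hD' : (quotientGraph T P).Adj C D := hD
    rw [quotientGraph, SimpleGraph.fromRel_adj] at hD'
    rcases hD'.2 with ⟨x, hx, y, hy, hxy⟩ | ⟨y, hy, x, hx, hxy⟩
    · exact ⟨y, Set.mem_biUnion hx hxy, hπeq D y hy⟩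
    · exact ⟨y, Set.mem_biUnion hx hxy.symm, hπeq D y hy⟩
  have hcfin : Finite G.ConnectedComponent := by
    choose d hd hdk using hnbr
    have : Finite {d : P | (quotientGraph T P).Adj C d} := hnfin
    refine Finite.of_injective
      (fun k => (⟨(d k).1, hd k⟩ : {d : P | (quotientGraph T P).Adj C d})) ?_
    intro k k' h
    have h' : d k = d k' := by
      apply Subtype.ext
      exact Subtype.mk.inj h
    rw [← hdk k, ← hdk k', h']
  have key : ∀ K : (T.induce {u : V | u ≠ v}).ConnectedComponent, K.supp.Infinite →
      ∃ k : G.ConnectedComponent, k.supp.Infinite ∧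
        ∀ D : {X : P | X ≠ C}, G.connectedComponentMk D = k →
          ∀ a : {u : V | u ≠ v}, (a : V) ∈ (D : P).1 →
            (T.induce {u : V | u ≠ v}).connectedComponentMk a = K := by
    intro K hK
    set S : Set {X : P | X ≠ C} := {D | ∃ a : {u : V | u ≠ v}, (a : V) ∈ (D : P).1 ∧
      (T.induce {u : V | u ≠ v}).connectedComponentMk a = K} with hS
    have hSinf : S.Infinite := by
      intro hSf
      have hf : (C.1 ∪ ⋃ D ∈ S, (D : P).1).Finite :=
        (hfin _ C.2).union (hSf.biUnion fun D _ => hfin _ D.1.2)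
      refine (hK.image (Subtype.val_injective.injOn)) (hf.subset ?_)
      rintro _ ⟨a, ha, rfl⟩
      by_cases hc : π a.1 = C
      · left
        rw [← hc]
        exact hπ _
      · right
        exact Set.mem_biUnion (x := (⟨π a.1, hc⟩ : {X : P | X ≠ C})) ⟨a, hπ _, ha⟩ (hπ _)
    by_contra hcon
    push Not at hcon
    apply hSinf
    have hf : (⋃ k ∈ G.connectedComponentMk '' S, k.supp).Finite := by
      refine (Set.toFinite (G.connectedComponentMk '' S)).biUnion ?_
      rintro _ ⟨D, ⟨a, haD, haK⟩, rfl⟩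
      by_contra hinf
      obtain ⟨E, hE, b, hb, hbK⟩ := hcon _ hinf
      apply hbK
      obtain ⟨p⟩ := SimpleGraph.ConnectedComponent.exact hE
      rw [← haK]
      exact SimpleGraph.ConnectedComponent.sound (quot_reach_aux T P hconn C v hv p b a hb haD)
    refine hf.subset fun D hD => ?_
    exact Set.mem_biUnion (Set.mem_image_of_mem _ hD) rfl
  have hdist : ∀ (K K' : (T.induce {u : V | u ≠ v}).ConnectedComponent)
      (k k' : G.ConnectedComponent), K ≠ K' →
      (∀ D : {X : P | X ≠ C}, G.connectedComponentMk D = k →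
          ∀ a : {u : V | u ≠ v}, (a : V) ∈ (D : P).1 →
            (T.induce {u : V | u ≠ v}).connectedComponentMk a = K) →
      (∀ D : {X : P | X ≠ C}, G.connectedComponentMk D = k' →
          ∀ a : {u : V | u ≠ v}, (a : V) ∈ (D : P).1 →
            (T.induce {u : V | u ≠ v}).connectedComponentMk a = K') → k ≠ k' := by
    intro K K' k k' hKK h h' e
    subst e
    obtain ⟨D, hD⟩ := k.exists_rep
    obtain ⟨x, hx⟩ := hne _ D.1.2
    have hxv : x ≠ v := fun e => hv _ D.2 (e ▸ hx)
    exact hKK ((h D hD ⟨x, hxv⟩ hx).symm.trans (h' D hD ⟨x, hxv⟩ hx))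
  obtain ⟨k₁, j1, f1⟩ := key K₁ i1
  obtain ⟨k₂, j2, f2⟩ := key K₂ i2
  obtain ⟨k₃, j3, f3⟩ := key K₃ i3
  have e12 := hdist _ _ _ _ h12 f1 f2
  have e13 := hdist _ _ _ _ h13 f1 f3
  have e23 := hdist _ _ _ _ h23 f2 f3
  refine ⟨⟨k₁, k₂, k₃, e12, e13, e23, j1, j2, j3⟩, ?_⟩
  obtain ⟨d₁, a1, b1⟩ := hnbr k₁
  obtain ⟨d₂, a2, b2⟩ := hnbr k₂
  obtain ⟨d₃, a3, b3⟩ := hnbr k₃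
  refine ⟨d₁, d₂, d₃, ?_, ?_, ?_, a1, a2, a3⟩
  · intro h
    exact e12 (by rw [← b1, ← b2, Subtype.ext h])
  · intro h
    exact e13 (by rw [← b1, ← b3, Subtype.ext h])
  · intro h
    exact e23 (by rw [← b2, ← b3, Subtype.ext h])
end

section
/- Let T be a locally finite tree, let S be a nonempty set of vertices of T, and let α be an injective real-valued function on the vertices of T. For a vertex v let S_v = {s ∈ S : dist(v,s) = dist(v,S)} be the set of elements of S closest to v (this set is finite and nonempty), and let φ(v) be the element of S_v minimizing α. Then: (i) for every s ∈ S, the set φ⁻¹(s) induces a connected subgraph of T (so the Voronoi cells form a partition of V(T) into connected sets); and (ii) each Voronoi cell φ⁻¹(s) contains exactly one element of S, namely s. -/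
theorem voronoi_aux_step {V : Type*} (T : SimpleGraph V) (hc : T.Connected) (v s : V) (n : ℕ)
    (h : T.dist v s = n + 1) : ∃ w, T.Adj v w ∧ T.dist w s = n := by
  obtain ⟨p, hp⟩ := hc.exists_walk_length_eq_dist v s
  cases p with
  | nil => simp at h
  | @cons _ w _ hvw p =>
    refine ⟨w, hvw, ?_⟩
    have h1 := SimpleGraph.dist_le p
    have h2 := hc.dist_triangle (u := v) (v := w) (w := s)
    have h3 : T.dist v w = 1 := SimpleGraph.dist_eq_one_iff_adj.mpr hvw
    simp only [SimpleGraph.Walk.length_cons] at hp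
    omega

theorem voronoi_aux_ball {V : Type*} (T : SimpleGraph V) [T.LocallyFinite] (hc : T.Connected)
    (n : ℕ) : ∀ v : V, {u | T.dist v u = n}.Finite := by
  induction n with
  | zero =>
    intro v
    refine (Set.finite_singleton v).subset ?_
    intro u hu
    exact (hc.dist_eq_zero_iff.mp hu).symm
  | succ n ih =>
    intro v
    refine ((Set.toFinite (T.neighborSet v)).biUnion (fun w _ => ih w)).subset ?_
    intro u hu
    obtain ⟨w, hw, hd⟩ := voronoi_aux_step T hc v u n hu
    exact Set.mem_biUnion (show w ∈ T.neighborSet v from hw) hd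

/-- **Voronoi partition of a tree.**
Let `T` be a locally finite tree, `S` a nonempty set of vertices and `α` an injective
real-valued function on the vertices.  For a vertex `v`, `closestInS v` denotes the set of
elements of `S` at minimal distance from `v`; it is finite and nonempty.  If `φ` assigns to
each vertex `v` the element of `closestInS v` with minimal `α`-value, then:
(i) for every `s ∈ S` the Voronoi cell `φ ⁻¹' {s}` induces a connected subgraph of `T`, and
(ii) each Voronoi cell `φ ⁻¹' {s}` contains exactly one element of `S`, namely `s`. -/
theorem voronoi_cells_connected_and_unique_center {V : Type*} (T : SimpleGraph V)
    [T.LocallyFinite] (hT : T.IsTree) (S : Set V) (hS : S.Nonempty)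
    (α : V → ℝ) (hα : Function.Injective α) :
    (∀ v : V, ({s ∈ S | ∀ s' ∈ S, T.dist v s ≤ T.dist v s'}).Finite ∧
              ({s ∈ S | ∀ s' ∈ S, T.dist v s ≤ T.dist v s'}).Nonempty) ∧
    ∀ φ : V → V,
      (∀ v : V, φ v ∈ {s ∈ S | ∀ s' ∈ S, T.dist v s ≤ T.dist v s'} ∧
        ∀ s ∈ {s ∈ S | ∀ s' ∈ S, T.dist v s ≤ T.dist v s'}, α (φ v) ≤ α s) →
      ∀ s ∈ S, (T.induce (φ ⁻¹' {s})).Connected ∧ (φ ⁻¹' {s}) ∩ S = {s} := by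
  have hc := hT.connected
  refine ⟨fun v => ?_, fun φ hφ s hs => ?_⟩
  · obtain ⟨m, hm, hmin⟩ := WellFounded.has_min (measure (T.dist v)).wf S hS
    have hmin' : ∀ s' ∈ S, T.dist v m ≤ T.dist v s' := fun s' hs' => not_lt.mp (hmin s' hs')
    refine ⟨(voronoi_aux_ball T hc (T.dist v m) v).subset ?_, m, hm, hmin'⟩
    rintro u ⟨hu, hu'⟩
    exact le_antisymm (hu' m hm) (hmin' u hu)
  · have hself : ∀ t ∈ S, φ t = t := by
      intro t ht
      have h := (hφ t).1.2 t ht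
      rw [SimpleGraph.dist_self] at h
      exact (hc.dist_eq_zero_iff.mp (Nat.le_zero.mp h)).symm
    have hstep : ∀ v w, φ v = s → T.Adj v w → T.dist v s = T.dist w s + 1 → φ w = s := by
      intro v w hv hvw hd
      have h1 : T.dist v w = 1 := SimpleGraph.dist_eq_one_iff_adj.mpr hvw
      have hle : ∀ x, T.dist v x ≤ T.dist w x + 1 := by
        intro x
        have := hc.dist_triangle (u := v) (v := w) (w := x)
        omega
      obtain ⟨⟨_, hv2⟩, hv3⟩ := hφ v
      obtain ⟨⟨hw1, hw2⟩, hw3⟩ := hφ w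
      rw [hv] at hv2 hv3
      have hsw : α (φ w) ≤ α s := by
        refine hw3 s ⟨hs, fun s' hs' => ?_⟩
        have := hv2 s' hs'
        have := hle s'
        omega
      have hws : α s ≤ α (φ w) := by
        refine hv3 _ ⟨hw1, fun s' hs' => ?_⟩
        have := hv2 s' hs'
        have := hle (φ w)
        have := hw2 s hs
        omega
      exact hα (le_antisymm hsw hws)
    have hreach : ∀ n v, ∀ hv : φ v = s, T.dist v s = n →
        (T.induce (φ ⁻¹' {s})).Reachable ⟨v, hv⟩ ⟨s, hself s hs⟩ := by
      intro n
      induction n with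
      | zero =>
        intro v hv hd
        have : v = s := hc.dist_eq_zero_iff.mp hd
        subst this
        exact SimpleGraph.Reachable.refl _
      | succ n ih =>
        intro v hv hd
        obtain ⟨w, hvw, hw⟩ := voronoi_aux_step T hc v s n hd
        have hw' := hstep v w hv hvw (by omega)
        have hadj : (T.induce (φ ⁻¹' {s})).Adj ⟨v, hv⟩ ⟨w, hw'⟩ := hvw
        exact hadj.reachable.trans (ih w hw' hw)
    constructor
    · haveI : Nonempty (φ ⁻¹' {s}) := ⟨⟨s, hself s hs⟩⟩
      refine SimpleGraph.Connected.mk ?_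
      rintro ⟨a, ha⟩ ⟨b, hb⟩
      exact (hreach _ a ha rfl).trans (hreach _ b hb rfl).symm
    · ext x
      constructor
      · rintro ⟨hx, hxS⟩
        exact (hself x hxS).symm.trans hx
      · intro hx
        have hx' : x = s := hx
        rw [hx']
        exact ⟨hself s hs, hs⟩
end
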